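/- There exists a constant C > 0 such that for every continuously differentiable function v : ℝ³ → ℝ with compact support, the Gagliardo–Nirenberg interpolation inequality ‖v‖_{L⁴(ℝ³)} ≤ C·‖v‖_{L²(ℝ³)}^{1/4}·‖Dv‖_{L²(ℝ³)}^{3/4} holds, where Dv denotes the (Fréchet) derivative of v and ‖Dv‖_{L²(ℝ³)} is the L² norm of x ↦ ‖Dv(x)‖. -/

import Mathlib

open MeasureTheory

/-!
The Sobolev inequality bounds the `Lᵖ'` norm of `v`, where `1/p' = 1/p - 1/n`, by the `Lᵖ` norm of
its derivative. Hölder's inequality applied to `|v| = |v|^θ * |v|^η` with `θ + η = 1` makes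
`1/p ↦ log ‖v‖_p` convex, so `‖v‖_r` is controlled by `‖v‖_q^θ * ‖v‖_p'^η` whenever
`1/r = θ/q + η/p'`. For `n = 3` and `p = q = 2` one has `p' = 6`, and `1/4 = (1/4)/2 + (3/4)/6`.
-/

open Module
open scoped NNReal ENNReal

theorem holderTriple_div_div {p q r : ℝ≥0∞} {θ η : ℝ≥0} (hθ : θ ≠ 0) (hη : η ≠ 0)
    (hr : r⁻¹ = θ * p⁻¹ + η * q⁻¹) : ENNReal.HolderTriple (p / θ) (q / η) r where
  inv_add_inv_eq_inv := by
    rw [ENNReal.inv_div (.inl ENNReal.coe_ne_top) (.inl (ENNReal.coe_ne_zero.2 hθ)),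
      ENNReal.inv_div (.inl ENNReal.coe_ne_top) (.inl (ENNReal.coe_ne_zero.2 hη)), hr,
      div_eq_mul_inv, div_eq_mul_inv]

section Interpolation

variable {α E : Type*} [MeasurableSpace α] {μ : Measure α} [NormedAddCommGroup E]

theorem eLpNorm_norm_rpow_div (f : α → E) (p : ℝ≥0∞) {t : ℝ≥0} (ht : t ≠ 0) :
    eLpNorm (fun x ↦ ‖f x‖ ^ (t : ℝ)) (p / t) μ = eLpNorm f p μ ^ (t : ℝ) := by
  rw [eLpNorm_norm_rpow f (NNReal.coe_pos.2 (pos_of_ne_zero ht)), ENNReal.ofReal_coe_nnreal,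
    ENNReal.div_mul_cancel (ENNReal.coe_ne_zero.2 ht) ENNReal.coe_ne_top]

theorem eLpNorm_le_eLpNorm_rpow_mul_eLpNorm_rpow {f : α → E}
    (hf : AEStronglyMeasurable f μ) {p q r : ℝ≥0∞} {θ η : ℝ≥0} (hθη : θ + η = 1)
    (hr : r⁻¹ = θ * p⁻¹ + η * q⁻¹) :
    eLpNorm f r μ ≤ eLpNorm f p μ ^ (θ : ℝ) * eLpNorm f q μ ^ (η : ℝ) := by
  rcases eq_or_ne θ 0 with rfl | hθ
  · obtain rfl : η = 1 := by simpa using hθη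
    obtain rfl : r = q := by simpa using hr
    simp
  rcases eq_or_ne η 0 with rfl | hη
  · obtain rfl : θ = 1 := by simpa using hθη
    obtain rfl : r = p := by simpa using hr
    simp
  let normPow (t : ℝ≥0) (x : α) : ℝ := ‖f x‖ ^ (t : ℝ)
  have normPow_meas (t : ℝ≥0) : AEStronglyMeasurable (normPow t) μ :=
    (hf.norm.aemeasurable.pow_const _).aestronglyMeasurable
  have normPow_smul_normPow : normPow θ • normPow η = fun x ↦ ‖f x‖ := by
    ext x
    calc
      ‖f x‖ ^ (θ : ℝ) * ‖f x‖ ^ (η : ℝ) = ‖f x‖ ^ ((θ + η : ℝ≥0) : ℝ) :=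
        (Real.rpow_add_of_nonneg (norm_nonneg _) θ.coe_nonneg η.coe_nonneg).symm
      _ = ‖f x‖ := by rw [hθη, NNReal.coe_one, Real.rpow_one]
  have := holderTriple_div_div hθ hη hr
  calc
    eLpNorm f r μ = eLpNorm (normPow θ • normPow η) r μ := by
      rw [normPow_smul_normPow, eLpNorm_norm]
    _ ≤ eLpNorm (normPow θ) (p / θ) μ * eLpNorm (normPow η) (q / η) μ :=
      eLpNorm_smul_le_mul_eLpNorm (normPow_meas η) (normPow_meas θ)
    _ = eLpNorm f p μ ^ (θ : ℝ) * eLpNorm f q μ ^ (η : ℝ) := by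
      rw [eLpNorm_norm_rpow_div f p hθ, eLpNorm_norm_rpow_div f q hη]

end Interpolation

section GagliardoNirenberg

variable {E F : Type*} [NormedAddCommGroup E] [NormedSpace ℝ E] [FiniteDimensional ℝ E]
  [MeasurableSpace E] [BorelSpace E] (μ : Measure E) [μ.IsAddHaarMeasure]
  [NormedAddCommGroup F] [InnerProductSpace ℝ F]

theorem eLpNorm_le_mul_eLpNorm_rpow_mul_eLpNorm_fderiv_rpow
    {v : E → F} (hv : ContDiff ℝ 1 v) (hvc : HasCompactSupport v)
    {p p' θ η : ℝ≥0} {q r : ℝ≥0∞} (hp : 1 ≤ p) (hn : 0 < finrank ℝ E)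
    (hp' : (p' : ℝ)⁻¹ = (p : ℝ)⁻¹ - (finrank ℝ E : ℝ)⁻¹)
    (hθη : θ + η = 1) (hr : r⁻¹ = θ * q⁻¹ + η * (p' : ℝ≥0∞)⁻¹) :
    eLpNorm v r μ ≤ (eLpNormLESNormFDerivOfEqInnerConst μ p : ℝ≥0∞) ^ (η : ℝ) *
      eLpNorm v q μ ^ (θ : ℝ) * eLpNorm (fderiv ℝ v) p μ ^ (η : ℝ) :=
  calc
    eLpNorm v r μ ≤ eLpNorm v q μ ^ (θ : ℝ) * eLpNorm v p' μ ^ (η : ℝ) :=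
      eLpNorm_le_eLpNorm_rpow_mul_eLpNorm_rpow hv.continuous.aestronglyMeasurable hθη hr
    _ ≤ eLpNorm v q μ ^ (θ : ℝ) *
          (eLpNormLESNormFDerivOfEqInnerConst μ p * eLpNorm (fderiv ℝ v) p μ) ^ (η : ℝ) := by
      gcongr
      exact eLpNorm_le_eLpNorm_fderiv_of_eq_inner μ hv hvc hp hn hp'
    _ = _ := by
      rw [ENNReal.mul_rpow_of_nonneg _ _ η.coe_nonneg, mul_left_comm, mul_assoc]

theorem lpNorm_le_mul_lpNorm_rpow_mul_lpNorm_fderiv_rpow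
    {v : E → F} (hv : ContDiff ℝ 1 v) (hvc : HasCompactSupport v)
    {p p' θ η : ℝ≥0} {q r : ℝ≥0∞} (hp : 1 ≤ p) (hn : 0 < finrank ℝ E)
    (hp' : (p' : ℝ)⁻¹ = (p : ℝ)⁻¹ - (finrank ℝ E : ℝ)⁻¹)
    (hθη : θ + η = 1) (hr : r⁻¹ = θ * q⁻¹ + η * (p' : ℝ≥0∞)⁻¹) :
    lpNorm v r μ ≤ (eLpNormLESNormFDerivOfEqInnerConst μ p : ℝ) ^ (η : ℝ) *
      lpNorm v q μ ^ (θ : ℝ) * lpNorm (fderiv ℝ v) p μ ^ (η : ℝ) := by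
  have hv_cont : Continuous v := hv.continuous
  have hdv_cont : Continuous (fderiv ℝ v) := hv.continuous_fderiv one_ne_zero
  have hvq : MemLp v q μ := hv_cont.memLp_of_hasCompactSupport hvc
  have hdvp : MemLp (fderiv ℝ v) p μ := hdv_cont.memLp_of_hasCompactSupport (hvc.fderiv ℝ)
  have eLpNorm_le :=
    eLpNorm_le_mul_eLpNorm_rpow_mul_eLpNorm_fderiv_rpow μ hv hvc hp hn hp' hθη hr
  have toReal_le := ENNReal.toReal_mono (by finiteness [hvq.eLpNorm_ne_top, hdvp.eLpNorm_ne_top])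
    eLpNorm_le
  simpa only [ENNReal.toReal_mul, ← ENNReal.toReal_rpow, ENNReal.coe_toReal,
    toReal_eLpNorm hv_cont.aestronglyMeasurable,
    toReal_eLpNorm hdv_cont.aestronglyMeasurable] using toReal_le

theorem stmt13_general {p q r θ η : ℝ} (hp : 1 ≤ p) (hpn : p < finrank ℝ E) (hq : 0 < q)
    (hθ : 0 ≤ θ) (hη : 0 ≤ η) (hθη : θ + η = 1)
    (hr : 1 / r = θ * (1 / q) + η * (1 / p - 1 / finrank ℝ E)) :
    ∃ C : ℝ, 0 < C ∧ ∀ v : E → F, ContDiff ℝ 1 v → HasCompactSupport v →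
      (∫ x, ‖v x‖ ^ r ∂μ) ^ (1 / r) ≤ C * ((∫ x, ‖v x‖ ^ q ∂μ) ^ (1 / q)) ^ θ *
        ((∫ x, ‖fderiv ℝ v x‖ ^ p ∂μ) ^ (1 / p)) ^ η := by
  have hp₀ : 0 < p := by positivity
  have hn : 0 < finrank ℝ E := by exact_mod_cast hp₀.trans hpn
  have hs : 0 < 1 / p - 1 / finrank ℝ E := sub_pos.2 (one_div_lt_one_div_of_lt hp₀ hpn)
  have hr₀ : 0 < r :=
    one_div_pos.1 (hr ▸ convex_Ioi (0 : ℝ) (one_div_pos.2 hq) hs hθ hη hθη)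
  obtain ⟨p', hp'₀, hp'⟩ : ∃ p' : ℝ, 0 < p' ∧ 1 / p' = 1 / p - 1 / finrank ℝ E :=
    ⟨_, one_div_pos.2 hs, one_div_one_div _⟩
  rw [← hp'] at hr
  simp only [one_div] at hr hp' ⊢
  lift p to ℝ≥0 using hp₀.le
  lift q to ℝ≥0 using hq.le
  lift r to ℝ≥0 using hr₀.le
  lift p' to ℝ≥0 using hp'₀.le
  lift θ to ℝ≥0 using hθ
  lift η to ℝ≥0 using hη
  norm_cast at hp hp₀ hq hr₀ hp'₀ hθη hr
  have hr_ennreal : (r : ℝ≥0∞)⁻¹ = θ * (q : ℝ≥0∞)⁻¹ + η * (p' : ℝ≥0∞)⁻¹ := by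
    rw [← ENNReal.coe_inv hr₀.ne', ← ENNReal.coe_inv hq.ne', ← ENNReal.coe_inv hp'₀.ne']
    exact_mod_cast hr
  refine ⟨(eLpNormLESNormFDerivOfEqInnerConst μ p : ℝ) ^ (η : ℝ) + 1, by positivity,
    fun v hv hvc ↦ ?_⟩
  have hv_meas : AEStronglyMeasurable v μ := hv.continuous.aestronglyMeasurable
  have hdv_meas : AEStronglyMeasurable (fderiv ℝ v) μ :=
    (hv.continuous_fderiv one_ne_zero).aestronglyMeasurable
  have bound := lpNorm_le_mul_lpNorm_rpow_mul_lpNorm_fderiv_rpow μ hv hvc hp hn hp' hθη hr_ennreal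
  rw [lpNorm_nnreal_eq_integral_norm_rpow hr₀.ne' hv_meas,
    lpNorm_nnreal_eq_integral_norm_rpow hq.ne' hv_meas,
    lpNorm_nnreal_eq_integral_norm_rpow hp₀.ne' hdv_meas] at bound
  refine bound.trans ?_
  gcongr
  exact (lt_add_one _).le

end GagliardoNirenberg

/-- Gagliardo–Nirenberg: there is `C > 0` such that for every `C¹`
compactly supported `v : ℝ³ → ℝ`,
`‖v‖_{L⁴} ≤ C·‖v‖_{L²}^{1/4}·‖Dv‖_{L²}^{3/4}`. -/
theorem stmt13 :
    ∃ C : ℝ, 0 < C ∧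
      ∀ v : EuclideanSpace ℝ (Fin 3) → ℝ, ContDiff ℝ 1 v → HasCompactSupport v →
        (∫ x : EuclideanSpace ℝ (Fin 3), |v x| ^ (4 : ℝ)) ^ ((1 : ℝ) / 4)
          ≤ C * ((∫ x : EuclideanSpace ℝ (Fin 3), |v x| ^ (2 : ℝ)) ^ ((1 : ℝ) / 2)) ^ ((1 : ℝ) / 4)
              * ((∫ x : EuclideanSpace ℝ (Fin 3), ‖fderiv ℝ v x‖ ^ (2 : ℝ)) ^ ((1 : ℝ) / 2)) ^ ((3 : ℝ) / 4) :=
  stmt13_general volume one_le_two (by norm_num) two_pos (by norm_num) (by norm_num)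
    (by norm_num) (by norm_num)
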